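/- Suppose the standing assumptions on f, g, h, Ω, F hold together with Assumptions 1, 2, 3 and 4, and let (x^k), (y^k), (c_k), (α_k) be generated by PGSA. Then there exists b > 0 such that for every k ∈ ℕ there exists ω^{k+1} ∈ ∂̂F(x^{k+1}) with ‖ω^{k+1}‖₂ ≤ b·‖x^{k+1} − x^k‖₂. -/

import Mathlib

open Filter Topology
open scoped RealInnerProductSpace

noncomputable section

/-- The Fréchet subdifferential of an extended-real-valued function `φ` at `x`:
the set of `y` with `liminf_{z→x, z≠x} (φ z − φ x − ⟨y, z−x⟩)/‖z−x‖ ≥ 0`,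
empty when `φ x = +∞`. -/
def fsub {n : ℕ} (φ : EuclideanSpace ℝ (Fin n) → EReal) (x : EuclideanSpace ℝ (Fin n)) :
    Set (EuclideanSpace ℝ (Fin n)) :=
  {y | φ x ≠ ⊤ ∧
    0 ≤ liminf (fun z => (φ z - φ x - ((⟪y, z - x⟫ : ℝ) : EReal)) / ((‖z - x‖ : ℝ) : EReal))
      (𝓝[≠] x)}

/-- The limiting (Mordukhovich) subdifferential. -/
def lsub {n : ℕ} (φ : EuclideanSpace ℝ (Fin n) → EReal) (x : EuclideanSpace ℝ (Fin n)) :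
    Set (EuclideanSpace ℝ (Fin n)) :=
  {y | ∃ u : ℕ → EuclideanSpace ℝ (Fin n), ∃ v : ℕ → EuclideanSpace ℝ (Fin n),
      Tendsto u atTop (𝓝 x) ∧ Tendsto (fun k => φ (u k)) atTop (𝓝 (φ x)) ∧
      (∀ k, v k ∈ fsub φ (u k)) ∧ Tendsto v atTop (𝓝 y)}

/-- The subdifferential of a convex real-valued function. -/
def csub {n : ℕ} (g : EuclideanSpace ℝ (Fin n) → ℝ) (x : EuclideanSpace ℝ (Fin n)) :
    Set (EuclideanSpace ℝ (Fin n)) :=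
  {y | ∀ z, g x + ⟪y, z - x⟫ ≤ g z}

/-- The (possibly set-valued) proximity operator of a proper lsc extended-real-valued
function `ψ` at `u`. -/
def proxSet {n : ℕ} (ψ : EuclideanSpace ℝ (Fin n) → EReal) (u : EuclideanSpace ℝ (Fin n)) :
    Set (EuclideanSpace ℝ (Fin n)) :=
  {y | ∀ z, ψ y + ((‖y - u‖ ^ 2 / 2 : ℝ) : EReal) ≤ ψ z + ((‖z - u‖ ^ 2 / 2 : ℝ) : EReal)}

/-- The fractional objective `F = (f+h)/g` on `Ω ∩ dom f`, `+∞` elsewhere. -/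
def Ffrac {n : ℕ} (f : EuclideanSpace ℝ (Fin n) → EReal) (g h : EuclideanSpace ℝ (Fin n) → ℝ) :
    EuclideanSpace ℝ (Fin n) → EReal :=
  fun x => if g x ≠ 0 ∧ f x ≠ ⊤ then ((((f x).toReal + h x) / g x : ℝ) : EReal) else ⊤

lemma zero_le_liminf_aux {X : Type*} (u : X → EReal) (l : Filter X)
    (H : ∀ ε : ℝ, 0 < ε → ∀ᶠ z in l, ((-ε : ℝ) : EReal) ≤ u z) : 0 ≤ liminf u l := by
  refine le_of_forall_lt fun a ha => ?_
  obtain ⟨r, har, hr⟩ := EReal.lt_iff_exists_real_btwn.1 ha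
  refine lt_of_lt_of_le har ?_
  have hr' : r < 0 := by exact_mod_cast hr
  have := H (-r) (by linarith)
  rw [neg_neg] at this
  exact le_liminf_of_le (by isBoundedDefault) this

lemma descent_aux {n : ℕ} (h : EuclideanSpace ℝ (Fin n) → ℝ)
    (h' : EuclideanSpace ℝ (Fin n) → EuclideanSpace ℝ (Fin n)) (L : ℝ) (hL : 0 < L)
    (hh_grad : ∀ z, HasGradientAt h (h' z) z)
    (hh_lip : ∀ u v, ‖h' u - h' v‖ ≤ L * ‖u - v‖) (a b : EuclideanSpace ℝ (Fin n)) :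
    h b ≤ h a + ⟪h' a, b - a⟫ + L / 2 * ‖b - a‖ ^ 2 := by
  set d := b - a with hd
  let φ : ℝ → ℝ := fun t => h (a + t • d) - t * ⟪h' a, d⟫ - L / 2 * ‖d‖ ^ 2 * t ^ 2
  have hder : ∀ t, HasDerivAt φ (⟪h' (a + t • d), d⟫ - ⟪h' a, d⟫ - L * ‖d‖ ^ 2 * t) t := by
    intro t
    have h1 : HasDerivAt (fun t : ℝ => a + t • d) d t := by
      simpa using ((hasDerivAt_id t).smul_const d).const_add a
    have h2 := (hh_grad (a + t • d)).hasFDerivAt.comp_hasDerivAt t h1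
    have h3 : HasDerivAt (fun t : ℝ => t * ⟪h' a, d⟫) ⟪h' a, d⟫ t := by
      simpa using (hasDerivAt_id t).mul_const ⟪h' a, d⟫
    have h4 : HasDerivAt (fun t : ℝ => L / 2 * ‖d‖ ^ 2 * t ^ 2) (L * ‖d‖ ^ 2 * t) t := by
      have := (hasDerivAt_pow 2 t).const_mul (L / 2 * ‖d‖ ^ 2)
      exact this.congr_deriv (by simp; ring)
    exact ((h2.sub h3).sub h4)
  have hanti : AntitoneOn φ (Set.Ici 0) := by
    apply antitoneOn_of_deriv_nonpos (convex_Ici 0)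
    · exact fun t _ => (hder t).continuousAt.continuousWithinAt
    · exact fun t _ => (hder t).differentiableAt.differentiableWithinAt
    · intro t ht
      rw [interior_Ici] at ht
      have ht : 0 < t := ht
      rw [(hder t).deriv, ← inner_sub_left]
      have h1 := real_inner_le_norm (h' (a + t • d) - h' a) d
      have h2 := hh_lip (a + t • d) a
      rw [add_sub_cancel_left, norm_smul, Real.norm_of_nonneg ht.le] at h2
      have h3 := mul_le_mul_of_nonneg_right h2 (norm_nonneg d)
      nlinarith
  have := hanti (Set.mem_Ici.2 le_rfl) (Set.mem_Ici.2 zero_le_one) zero_le_one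
  simp only [φ, one_smul, zero_smul, add_zero, one_mul, zero_mul, hd, add_sub_cancel] at this
  rw [← hd] at this
  linarith

lemma csub_eq_grad {n : ℕ} (g : EuclideanSpace ℝ (Fin n) → ℝ) (x y v : EuclideanSpace ℝ (Fin n))
    (hv : HasGradientAt g v x) (hy : y ∈ csub g x) : y = v := by
  have h1 : HasFDerivAt (fun z => g z - (InnerProductSpace.toDual ℝ _ y) z)
      (InnerProductSpace.toDual ℝ _ v - (InnerProductSpace.toDual ℝ _ y)) x :=
    hv.hasFDerivAt.sub (InnerProductSpace.toDual ℝ _ y).hasFDerivAt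
  have h2 : IsLocalMin (fun z => g z - (InnerProductSpace.toDual ℝ _ y) z) x := by
    refine Eventually.of_forall fun z => ?_
    have := hy z
    rw [inner_sub_right] at this
    simp only [InnerProductSpace.toDual_apply_apply]
    linarith
  have h3 := h2.hasFDerivAt_eq_zero h1
  exact ((InnerProductSpace.toDual ℝ _).injective (sub_eq_zero.1 h3)).symm

lemma fsub_aux {n : ℕ} (f : EuclideanSpace ℝ (Fin n) → EReal)
    (g h : EuclideanSpace ℝ (Fin n) → ℝ)
    (hg_pos : ∀ z, f z ≠ ⊤ → g z ≠ 0 → 0 < g z)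
    (p v hp gp ω : EuclideanSpace ℝ (Fin n)) (c C : ℝ)
    (hfp : f p ≠ ⊤) (hgp : g p ≠ 0) (hh : HasGradientAt h hp p) (hg : HasGradientAt g gp p)
    (hc : c = ((f p).toReal + h p) / g p)
    (hv : ∀ z, f z ≠ ⊤ → (f p).toReal + ⟪v, z - p⟫ - C * ‖z - p‖ ^ 2 ≤ (f z).toReal)
    (hω : g p • ω = v + hp - c • gp) :
    ω ∈ fsub (Ffrac f g h) p := by
  have hg0 := hg_pos p hfp hgp
  have hFp : Ffrac f g h p = (c : EReal) := by
    simp [Ffrac, hgp, hfp, hc]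
  refine ⟨by rw [hFp]; exact EReal.coe_ne_top _, ?_⟩
  apply zero_le_liminf_aux
  intro ε hε
  have hN : (f p).toReal + h p = c * g p := by rw [hc]; field_simp
  set η := ε * g p / 16 with hη
  have hηpos : 0 < η := by positivity
  have e1 := hh.hasFDerivAt.isLittleO.def hηpos
  have e2 := hg.hasFDerivAt.isLittleO.def (c := η / (|c| + 1)) (by positivity)
  have hgc : ContinuousAt g p := hg.hasFDerivAt.continuousAt
  have e3 : ∀ᶠ z in 𝓝 p, g p / 2 < g z := hgc.eventually (lt_mem_nhds (by linarith))
  have e4 : ∀ᶠ z in 𝓝 p, |g p - g z| * ‖ω‖ < η := by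
    have : ContinuousAt (fun z => |g p - g z| * ‖ω‖) p := by fun_prop
    exact this.eventually (gt_mem_nhds (by simpa using hηpos))
  have e5 : ∀ᶠ z in 𝓝 p, C * ‖z - p‖ < η := by
    have : ContinuousAt (fun z => C * ‖z - p‖) p := by fun_prop
    exact this.eventually (gt_mem_nhds (by simpa using hηpos))
  filter_upwards [nhdsWithin_le_nhds e1, nhdsWithin_le_nhds e2, nhdsWithin_le_nhds e3,
    nhdsWithin_le_nhds e4, nhdsWithin_le_nhds e5, self_mem_nhdsWithin] with z e1 e2 e3 e4 e5 hz
  have hd : 0 < ‖z - p‖ := norm_pos_iff.2 (sub_ne_zero.2 hz)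
  rw [hFp]
  have hgz : 0 < g z := by linarith
  by_cases hfz : f z = ⊤
  · have : Ffrac f g h z = ⊤ := by simp [Ffrac, hfz]
    rw [this, EReal.top_sub_coe, EReal.top_sub_coe, EReal.top_div_of_pos_ne_top
      (by exact_mod_cast hd) (EReal.coe_ne_top _)]
    exact le_top
  have hFz : Ffrac f g h z = ((((f z).toReal + h z) / g z : ℝ) : EReal) := by
    simp [Ffrac, hgz.ne', hfz]
  rw [hFz]
  rw [← EReal.coe_sub, ← EReal.coe_sub, ← EReal.coe_div, EReal.coe_le_coe_iff]
  rw [le_div_iff₀ hd]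
  simp only [InnerProductSpace.toDual_apply_apply, Real.norm_eq_abs] at e1 e2
  have a1 := (abs_le.1 e1).1
  have b2 : |c * (g z - g p - ⟪gp, z - p⟫)| ≤ η * ‖z - p‖ := by
    rw [abs_mul]
    calc _ ≤ |c| * (η / (|c| + 1) * ‖z - p‖) := by gcongr
      _ = (|c| / (|c| + 1)) * (η * ‖z - p‖) := by ring
      _ ≤ 1 * (η * ‖z - p‖) := by
        gcongr
        rw [div_le_one (by positivity)]; linarith
      _ = _ := one_mul _
  have a2 := (abs_le.1 b2).2
  have a3 := hv z hfz
  have hin : g p * ⟪ω, z - p⟫ = ⟪v, z - p⟫ + ⟪hp, z - p⟫ - c * ⟪gp, z - p⟫ := by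
    rw [← real_inner_smul_left, hω, inner_sub_left, inner_add_left, real_inner_smul_left]
  have a4 : |(g p - g z) * ⟪ω, z - p⟫| ≤ η * ‖z - p‖ := by
    rw [abs_mul]
    calc _ ≤ |g p - g z| * (‖ω‖ * ‖z - p‖) := by gcongr; exact abs_real_inner_le_norm _ _
      _ = |g p - g z| * ‖ω‖ * ‖z - p‖ := by ring
      _ ≤ _ := by gcongr
  have a4 := (abs_le.1 a4).1
  have a5 : C * ‖z - p‖ ^ 2 ≤ η * ‖z - p‖ := by
    rw [sq, ← mul_assoc]; gcongr
  have a6 : 8 * η * ‖z - p‖ ≤ ε * g z * ‖z - p‖ := by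
    refine mul_le_mul_of_nonneg_right ?_ hd.le
    rw [hη]; nlinarith
  have key : (⟪ω, z - p⟫ - ε * ‖z - p‖ + c) ≤ ((f z).toReal + h z) / g z := by
    rw [le_div_iff₀ hgz]
    have := mul_pos hηpos hd
    nlinarith
  linarith
lemma prox_aux {n : ℕ} (f : EuclideanSpace ℝ (Fin n) → EReal) (hb : ∀ z, f z ≠ ⊥)
    (a : ℝ) (ha : 0 < a) (u p x : EuclideanSpace ℝ (Fin n)) (hx : f x ≠ ⊤)
    (hp : p ∈ proxSet (fun z => (a : EReal) * f z) u) :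
    f p ≠ ⊤ ∧ ∀ z, f z ≠ ⊤ →
      a * (f p).toReal + ‖p - u‖ ^ 2 / 2 ≤ a * (f z).toReal + ‖z - u‖ ^ 2 / 2 := by
  have hfp : f p ≠ ⊤ := by
    intro h
    have h1 := hp x
    simp only [h] at h1
    rw [EReal.coe_mul_top_of_pos ha, EReal.top_add_coe, ← EReal.coe_toReal hx (hb x)] at h1
    rw [← EReal.coe_mul, ← EReal.coe_add] at h1
    exact EReal.coe_ne_top _ (top_le_iff.1 h1)
  refine ⟨hfp, fun z hz => ?_⟩
  have h1 := hp z
  simp only at h1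
  rw [← EReal.coe_toReal hz (hb z), ← EReal.coe_toReal hfp (hb p)] at h1
  exact_mod_cast h1

lemma prox_sub_aux {n : ℕ} (u p z : EuclideanSpace ℝ (Fin n)) (a s t : ℝ) (ha : 0 < a)
    (H : a * s + ‖p - u‖ ^ 2 / 2 ≤ a * t + ‖z - u‖ ^ 2 / 2) :
    s + ⟪(1 / a) • (u - p), z - p⟫ - (1 / (2 * a)) * ‖z - p‖ ^ 2 ≤ t := by
  have h1 : z - u = (z - p) - (u - p) := by abel
  have h2 : ‖p - u‖ = ‖u - p‖ := norm_sub_rev _ _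
  rw [h1, h2, norm_sub_sq_real (z - p) (u - p)] at H
  rw [real_inner_smul_left, real_inner_comm]
  have h3 : a * (s + 1 / a * ⟪z - p, u - p⟫ - (1 / (2 * a)) * ‖z - p‖ ^ 2) ≤ a * t := by
    have : a * (s + 1 / a * ⟪z - p, u - p⟫ - (1 / (2 * a)) * ‖z - p‖ ^ 2)
        = a * s + ⟪z - p, u - p⟫ - ‖z - p‖ ^ 2 / 2 := by field_simp
    linarith
  exact le_of_mul_le_mul_left h3 ha

/-- Lemma 4.8: relative error condition for the PGSA sequence. -/
theorem pgsa_relative_error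
    {n : ℕ} (hn : 1 ≤ n)
    (f : EuclideanSpace ℝ (Fin n) → EReal) (g h : EuclideanSpace ℝ (Fin n) → ℝ)
    (h' : EuclideanSpace ℝ (Fin n) → EuclideanSpace ℝ (Fin n)) (L : ℝ)
    (hf_ne_bot : ∀ z, f z ≠ ⊥) (hf_proper : ∃ z, f z ≠ ⊤)
    (hf_lsc : LowerSemicontinuous f)
    (hf_bdd : ∃ m : ℝ, ∀ z, (m : EReal) ≤ f z)
    (hf_cont : ContinuousOn f {z | f z ≠ ⊤})
    (hg_cvx : ConvexOn ℝ Set.univ g)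
    (hL : 0 < L)
    (hh_grad : ∀ z, HasGradientAt h (h' z) z)
    (hh_lip : LipschitzWith (Real.toNNReal L) h')
    (hΩ : ∃ z, g z ≠ 0)
    (hfh : ∀ z, 0 ≤ f z + ((h z : ℝ) : EReal))
    (hg_pos : ∀ z, f z ≠ ⊤ → g z ≠ 0 → 0 < g z)
    (hA1 : ∀ z, g z = 0 → f z + ((h z : ℝ) : EReal) ≠ 0)
    (hA2 : ∀ t : ℝ, Bornology.IsBounded {z | Ffrac f g h z ≤ (t : EReal)})
    (hA3 : ∀ z, f z ≠ ⊤ → ∃ K : ℝ, ∃ δ > (0 : ℝ), ∀ u, ‖u - z‖ < δ → f u ≠ ⊤ →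
      ∀ v, ‖v - z‖ < δ → f v ≠ ⊤ → |(f u).toReal - (f v).toReal| ≤ K * ‖u - v‖)
    (g' : EuclideanSpace ℝ (Fin n) → EuclideanSpace ℝ (Fin n))
    (hA4_grad : ∀ z, g z ≠ 0 → HasGradientAt g (g' z) z)
    (hA4_cont : ContinuousOn g' {z | g z ≠ 0})
    (hA4_lip : ∀ z, g z ≠ 0 → ∃ K : NNReal, ∃ δ > (0 : ℝ),
      LipschitzOnWith K g' (Metric.ball z δ ∩ {w | g w ≠ 0}))
    (x y : ℕ → EuclideanSpace ℝ (Fin n)) (c α : ℕ → ℝ) (αlo αhi : ℝ)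
    (hx0 : g (x 0) ≠ 0 ∧ f (x 0) ≠ ⊤)
    (hαlo : 0 < αlo) (hαhi : αhi < 1 / L) (hα : ∀ k, αlo ≤ α k ∧ α k ≤ αhi)
    (hy : ∀ k, y (k + 1) ∈ csub g (x k))
    (hc : ∀ k, c k = ((f (x k)).toReal + h (x k)) / g (x k))
    (hiter : ∀ k, x (k + 1) ∈ proxSet (fun z => ((α k : ℝ) : EReal) * f z)
      (x k - α k • h' (x k) + (α k * c k) • y (k + 1)))
    : ∃ b > (0 : ℝ), ∀ k, ∃ ω ∈ fsub (Ffrac f g h) (x (k + 1)),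
        ‖ω‖ ≤ b * ‖x (k + 1) - x k‖ := by

  have hlipR : ∀ u v, ‖h' u - h' v‖ ≤ L * ‖u - v‖ := by
    intro u v
    have := hh_lip.dist_le_mul u v
    rwa [dist_eq_norm, dist_eq_norm, Real.coe_toNNReal L hL.le] at this
  have hNnn : ∀ z, f z ≠ ⊤ → 0 ≤ (f z).toReal + h z := by
    intro z hz
    have := hfh z
    rw [← EReal.coe_toReal hz (hf_ne_bot z)] at this
    exact_mod_cast this
  have hA1' : ∀ z, f z ≠ ⊤ → g z = 0 → (f z).toReal + h z ≠ 0 := by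
    intro z hz hg0 h0
    apply hA1 z hg0
    rw [← EReal.coe_toReal hz (hf_ne_bot z)]
    exact_mod_cast h0
  have hαpos : ∀ k, 0 < α k := fun k => lt_of_lt_of_le hαlo (hα k).1
  have step : ∀ k, f (x k) ≠ ⊤ → g (x k) ≠ 0 →
      f (x (k + 1)) ≠ ⊤ ∧ g (x (k + 1)) ≠ 0 ∧ c (k + 1) ≤ c k := by
    intro k hfk hgk
    obtain ⟨hfp, hP⟩ := prox_aux f hf_ne_bot (α k) (hαpos k) _ _ (x k) hfk (hiter k)
    have hgkp := hg_pos _ hfk hgk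
    have hck : 0 ≤ c k := by rw [hc]; exact div_nonneg (hNnn _ hfk) hgkp.le
    have hNk : (f (x k)).toReal + h (x k) = c k * g (x k) := by rw [hc]; field_simp
    have h1 := hP (x k) hfk
    have hd := descent_aux h h' L hL hh_grad hlipR (x k) (x (k + 1))
    have hsub := hy k (x (k + 1))
    set d := x (k + 1) - x k with hdd
    have ea : x (k + 1) - (x k - α k • h' (x k) + (α k * c k) • y (k + 1))
        = d + α k • (h' (x k) - c k • y (k + 1)) := by
      rw [hdd, smul_sub, smul_smul]; abel
    have eb : x k - (x k - α k • h' (x k) + (α k * c k) • y (k + 1))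
        = α k • (h' (x k) - c k • y (k + 1)) := by
      rw [smul_sub, smul_smul]; abel
    rw [ea, eb, norm_add_sq_real, real_inner_smul_right, inner_sub_right,
      real_inner_smul_right, real_inner_comm, real_inner_comm (y (k + 1))] at h1
    have hαL : α k * L ≤ 1 := by
      have := ((hα k).2.trans_lt hαhi).le
      rwa [le_div_iff₀ hL] at this
    have h2 : α k * ((f (x (k + 1))).toReal + h (x (k + 1))) ≤ α k * (c k * g (x (k + 1))) := by
      have h3 := mul_le_mul_of_nonneg_left hd (hαpos k).le
      have h4 := mul_le_mul_of_nonneg_left (mul_le_mul_of_nonneg_left hsub hck) (hαpos k).le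
      have h5 := mul_le_mul_of_nonneg_right hαL (sq_nonneg ‖d‖)
      have h6 : α k * ((f (x k)).toReal + h (x k)) = α k * (c k * g (x k)) := by rw [hNk]
      nlinarith
    have h3 := le_of_mul_le_mul_left h2 (hαpos k)
    have hg1 : g (x (k + 1)) ≠ 0 := by
      intro h0
      rw [h0, mul_zero] at h3
      exact hA1' _ hfp h0 (le_antisymm h3 (hNnn _ hfp))
    refine ⟨hfp, hg1, ?_⟩
    rw [hc (k + 1), div_le_iff₀ (hg_pos _ hfp hg1)]
    exact h3
  have inv : ∀ k, f (x k) ≠ ⊤ ∧ g (x k) ≠ 0 ∧ c k ≤ c 0 := by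
    intro k
    induction k with
    | zero => exact ⟨hx0.2, hx0.1, le_rfl⟩
    | succ k ih =>
      obtain ⟨h1, h2, h3⟩ := step k ih.1 ih.2.1
      exact ⟨h1, h2, h3.trans ih.2.2⟩
  have hcnn : ∀ k, 0 ≤ c k := by
    intro k
    obtain ⟨h1, h2, -⟩ := inv k
    rw [hc]; exact div_nonneg (hNnn _ h1) (hg_pos _ h1 h2).le
  have hgLL : LocallyLipschitz g := hg_cvx.locallyLipschitz
  have hgcont : Continuous g := hgLL.continuous
  have hhC : ContDiff ℝ 1 h := by
    rw [contDiff_one_iff_hasFDerivAt]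
    exact ⟨fun z => InnerProductSpace.toDual ℝ _ (h' z),
      (InnerProductSpace.toDual ℝ _).continuous.comp hh_lip.continuous,
      fun z => (hh_grad z).hasFDerivAt⟩
  have hhLL : LocallyLipschitz h := hhC.locallyLipschitz
  set S : Set (EuclideanSpace ℝ (Fin n)) := {z | f z ≤ ((c 0 * g z - h z : ℝ) : EReal)} with hS
  have hSf : ∀ z ∈ S, f z ≠ ⊤ := by
    intro z hz h
    have hz : f z ≤ _ := hz
    rw [h] at hz
    exact EReal.coe_ne_top _ (top_le_iff.1 hz)
  have hSr : ∀ z ∈ S, (f z).toReal + h z ≤ c 0 * g z := by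
    intro z hz
    have hz' : f z ≤ _ := hz
    rw [← EReal.coe_toReal (hSf z hz) (hf_ne_bot z), EReal.coe_le_coe_iff] at hz'
    linarith
  have hSg : ∀ z ∈ S, g z ≠ 0 := by
    intro z hz h0
    have := hSr z hz
    rw [h0, mul_zero] at this
    exact hA1' z (hSf z hz) h0 (le_antisymm this (hNnn _ (hSf z hz)))
  have hScl : IsClosed S := by
    have h1 := hf_lsc.isClosed_epigraph
    have h2 : Continuous (fun z => (z, ((c 0 * g z - h z : ℝ) : EReal))) :=
      continuous_id.prodMk (continuous_coe_real_ereal.comp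
        ((continuous_const.mul hgcont).sub hhC.continuous))
    exact h1.preimage h2
  have hSb : Bornology.IsBounded S := by
    refine (hA2 (c 0)).subset fun z hz => ?_
    have h1 := hSf z hz
    have h2 := hSg z hz
    have h3 : Ffrac f g h z = ((((f z).toReal + h z) / g z : ℝ) : EReal) := by
      simp [Ffrac, h1, h2]
    show Ffrac f g h z ≤ _
    rw [h3, EReal.coe_le_coe_iff, div_le_iff₀ (hg_pos z h1 h2)]
    exact hSr z hz
  have hSc : IsCompact S := Metric.isCompact_of_isClosed_isBounded hScl hSb
  have hxS : ∀ k, x k ∈ S := by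
    intro k
    obtain ⟨h1, h2, h3⟩ := inv k
    have h4 := hg_pos _ h1 h2
    show f (x k) ≤ _
    rw [← EReal.coe_toReal h1 (hf_ne_bot _), EReal.coe_le_coe_iff]
    rw [hc k, div_le_iff₀ h4] at h3
    linarith
  have toR : ∀ {E : Type} [NormedAddCommGroup E] (φ : EuclideanSpace ℝ (Fin n) → E),
      LocallyLipschitzOn S φ → ∃ K : ℝ, 0 ≤ K ∧ ∀ u ∈ S, ∀ v ∈ S, ‖φ u - φ v‖ ≤ K * ‖u - v‖ := by
    intro E _ φ hφ
    obtain ⟨K, hK⟩ := hφ.exists_lipschitzOnWith_of_compact hSc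
    refine ⟨K, K.2, fun u hu v hv => ?_⟩
    have := hK.dist_le_mul u hu v hv
    rwa [dist_eq_norm, dist_eq_norm] at this
  obtain ⟨Kg, hKg0, hKg⟩ := toR g hgLL.locallyLipschitzOn
  obtain ⟨Kh, hKh0, hKh⟩ := toR h hhLL.locallyLipschitzOn
  obtain ⟨Kf, hKf0, hKf⟩ := toR (fun z => (f z).toReal) (by
    intro z hz
    obtain ⟨K, δ, hδ, hK⟩ := hA3 z (hSf z hz)
    refine ⟨Real.toNNReal K, Metric.ball z δ ∩ S, ?_, ?_⟩
    · exact inter_mem (nhdsWithin_le_nhds (Metric.ball_mem_nhds z hδ)) self_mem_nhdsWithin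
    · refine LipschitzOnWith.of_dist_le_mul fun u hu v hv => ?_
      have := hK u (by simpa [dist_eq_norm] using hu.1) (hSf u hu.2) v
        (by simpa [dist_eq_norm] using hv.1) (hSf v hv.2)
      rw [Real.dist_eq, dist_eq_norm]
      refine this.trans ?_
      gcongr
      exact Real.le_coe_toNNReal K)
  obtain ⟨Kd, hKd0, hKd⟩ := toR g' (by
    intro z hz
    obtain ⟨K, δ, hδ, hK⟩ := hA4_lip z (hSg z hz)
    refine ⟨K, Metric.ball z δ ∩ S, ?_, ?_⟩
    · exact inter_mem (nhdsWithin_le_nhds (Metric.ball_mem_nhds z hδ)) self_mem_nhdsWithin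
    · exact hK.mono fun u hu => ⟨hu.1, hSg u hu.2⟩)
  obtain ⟨M, hM⟩ := hSc.exists_bound_of_continuousOn (hA4_cont.mono hSg)
  have hM0 : 0 ≤ M := (norm_nonneg _).trans (hM _ (hxS 0))
  obtain ⟨zm, hzmS, hzm⟩ := hSc.exists_isMinOn ⟨x 0, hxS 0⟩ hgcont.continuousOn
  set γ := g zm with hγ
  have hγ0 : 0 < γ := hg_pos zm (hSf _ hzmS) (hSg _ hzmS)
  have hγle : ∀ k, γ ≤ g (x k) := fun k => hzm (hxS k)
  have hαL0 : 0 < 1 / αlo := by positivity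
  have hc0 := hcnn 0
  refine ⟨(1 / αlo + L + c 0 * Kd + (c 0 * Kg + Kf + Kh) / γ * M) / γ, by positivity, fun k => ?_⟩
  obtain ⟨hfk, hgk, hck0⟩ := inv k
  obtain ⟨hfp, hgp, -⟩ := inv (k + 1)
  obtain ⟨-, hP⟩ := prox_aux f hf_ne_bot (α k) (hαpos k) _ _ (x k) hfk (hiter k)
  have hyk := csub_eq_grad g (x k) (y (k + 1)) (g' (x k)) (hA4_grad _ hgk) (hy k)
  have hgpp := hg_pos _ hfp hgp
  have hgkp := hg_pos _ hfk hgk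
  set u := x k - α k • h' (x k) + (α k * c k) • y (k + 1) with hu
  set w := (1 / α k) • (u - x (k + 1)) + h' (x (k + 1)) - c (k + 1) • g' (x (k + 1)) with hw
  refine ⟨(1 / g (x (k + 1))) • w, ?_, ?_⟩
  · refine fsub_aux f g h hg_pos (x (k + 1)) ((1 / α k) • (u - x (k + 1))) (h' (x (k + 1)))
      (g' (x (k + 1))) _ (c (k + 1)) (1 / (2 * α k)) hfp hgp (hh_grad _) (hA4_grad _ hgp)
      (hc _) (fun z hz => prox_sub_aux u _ z (α k) _ _ (hαpos k) (hP z hz)) ?_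
    rw [smul_smul, mul_one_div_cancel hgp, one_smul]
  · have hweq : w = (1 / α k) • (x k - x (k + 1)) + (h' (x (k + 1)) - h' (x k))
        + c k • (g' (x k) - g' (x (k + 1))) + (c k - c (k + 1)) • g' (x (k + 1)) := by
      have ha := (hαpos k).ne'
      have e1 : (1 / α k) • (u - x (k + 1))
          = (1 / α k) • (x k - x (k + 1)) - h' (x k) + c k • g' (x k) := by
        rw [hu, hyk]
        have : x k - α k • h' (x k) + (α k * c k) • g' (x k) - x (k + 1)
          = (x k - x (k + 1)) - α k • h' (x k) + (α k * c k) • g' (x k) := by abel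
        rw [this, smul_add, smul_sub, smul_smul, smul_smul, one_div_mul_cancel ha, one_smul,
          ← mul_assoc, one_div_mul_cancel ha, one_mul]
      rw [hw, e1, smul_sub (c k), sub_smul]
      abel
    set D := ‖x (k + 1) - x k‖ with hD
    have hD0 : 0 ≤ D := norm_nonneg _
    have hDr : ‖x k - x (k + 1)‖ = D := norm_sub_rev _ _
    have n1 : ‖(1 / α k) • (x k - x (k + 1))‖ ≤ 1 / αlo * D := by
      rw [norm_smul, hDr, Real.norm_of_nonneg (one_div_nonneg.2 (hαpos k).le)]
      have := (hα k).1
      gcongr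
    have n2 : ‖h' (x (k + 1)) - h' (x k)‖ ≤ L * D := hlipR _ _
    have n3 : ‖c k • (g' (x k) - g' (x (k + 1)))‖ ≤ c 0 * Kd * D := by
      rw [norm_smul, Real.norm_of_nonneg (hcnn k), mul_assoc, ← hDr]
      exact mul_le_mul hck0 (hKd _ (hxS _) _ (hxS _)) (norm_nonneg _) hc0
    have hcd : |c k - c (k + 1)| ≤ (c 0 * Kg + Kf + Kh) / γ * D := by
      have q1 : (f (x k)).toReal + h (x k) = c k * g (x k) := by rw [hc]; field_simp
      have q2 : (f (x (k + 1))).toReal + h (x (k + 1)) = c (k + 1) * g (x (k + 1)) := by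
        rw [hc (k + 1)]; field_simp
      have q3 : (c k - c (k + 1)) * g (x (k + 1)) = c k * (g (x (k + 1)) - g (x k))
          + ((f (x k)).toReal - (f (x (k + 1))).toReal) + (h (x k) - h (x (k + 1))) := by
        linarith
      have r1 : |c k * (g (x (k + 1)) - g (x k))| ≤ c 0 * (Kg * D) := by
        rw [abs_mul, abs_of_nonneg (hcnn k)]
        exact mul_le_mul hck0 (hKg _ (hxS _) _ (hxS _)) (abs_nonneg _) hc0
      have r2 : |(f (x k)).toReal - (f (x (k + 1))).toReal| ≤ Kf * D := by
        rw [← hDr]; exact hKf _ (hxS _) _ (hxS _)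
      have r3 : |h (x k) - h (x (k + 1))| ≤ Kh * D := by
        rw [← hDr]; exact hKh _ (hxS _) _ (hxS _)
      have q4 : |c k - c (k + 1)| * g (x (k + 1)) ≤ (c 0 * Kg + Kf + Kh) * D := by
        rw [← abs_of_pos hgpp, ← abs_mul, q3]
        refine (abs_add_three _ _ _).trans ?_
        linarith
      have q5 : |c k - c (k + 1)| * γ ≤ (c 0 * Kg + Kf + Kh) * D :=
        (mul_le_mul_of_nonneg_left (hγle _) (abs_nonneg _)).trans q4
      rw [div_mul_eq_mul_div, le_div_iff₀ hγ0]
      exact q5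
    have n4 : ‖(c k - c (k + 1)) • g' (x (k + 1))‖ ≤ (c 0 * Kg + Kf + Kh) / γ * M * D := by
      rw [norm_smul, Real.norm_eq_abs, mul_right_comm]
      exact mul_le_mul hcd (hM _ (hxS _)) (norm_nonneg _) (by positivity)
    have hwn : ‖w‖ ≤ (1 / αlo + L + c 0 * Kd + (c 0 * Kg + Kf + Kh) / γ * M) * D := by
      rw [hweq]
      refine (norm_add_le _ _).trans ?_
      have t1 := norm_add₃_le (a := (1 / α k) • (x k - x (k + 1)))
        (b := h' (x (k + 1)) - h' (x k)) (c := c k • (g' (x k) - g' (x (k + 1))))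
      linarith
    rw [norm_smul, Real.norm_of_nonneg (one_div_nonneg.2 hgpp.le), one_div_mul_eq_div,
      div_mul_eq_mul_div]
    exact div_le_div₀ (by positivity) hwn hγ0 (hγle _)
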